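/- Let w ∈ Q(ℝ₊) be admissible, i.e. there exist η₀>0 and K₀>0 with ∫_0^t w(s)^{-1} ds ≥ e^{-K₀/√t} for all 0<t<η₀. Then for every μ>0 there exist positive numbers η and K such that √t · G_η(t) ≤ K for all t ∈ (0,η). -/

import Mathlib

open MeasureTheory Set

/-- `f_η(t) = ∫_0^t w(s)⁻¹ ds`  (case `w ∈ Q(ℝ₊)`). -/
noncomputable def fQ (w : ℝ → ℝ) (t : ℝ) : ℝ := ∫ s in (0:ℝ)..t, (w s)⁻¹

/-- `F_η(t) = w(t) f_η(t)`. -/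
noncomputable def FQ (w : ℝ → ℝ) (t : ℝ) : ℝ := w t * fQ w t

/-- `G_η(t) = μ + ∫_t^η F_η(s)⁻¹ ds`. -/
noncomputable def GQ (w : ℝ → ℝ) (μ η t : ℝ) : ℝ := μ + ∫ s in t..η, (FQ w s)⁻¹

/-- The primitive `fQ w` is positive on `(0, ∞)`. -/
theorem fQ_pos {w : ℝ → ℝ} (hw_pos : ∀ t, 0 < t → 0 < w t)
    (hwQ : ∀ b, 0 < b → IntegrableOn (fun s => (w s)⁻¹) (Ioo 0 b)) {t : ℝ} (ht : 0 < t) :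
    0 < fQ w t :=
  intervalIntegral.intervalIntegral_pos_of_pos_on
    ((intervalIntegrable_iff_integrableOn_Ioo_of_le ht.le).2 (hwQ t ht))
    (fun _ hs => inv_pos.2 (hw_pos _ hs.1)) ht

/-- The primitive `fQ w` has derivative `1 / w` on `(0, ∞)`. -/
theorem hasDerivAt_fQ {w : ℝ → ℝ} (hw_pos : ∀ t, 0 < t → 0 < w t)
    (hw_cont : ContinuousOn w (Ioi 0))
    (hwQ : ∀ b, 0 < b → IntegrableOn (fun s => (w s)⁻¹) (Ioo 0 b)) {t : ℝ} (ht : 0 < t) :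
    HasDerivAt (fQ w) (w t)⁻¹ t := by
  have hcont : ContinuousOn (fun s => (w s)⁻¹) (Ioi 0) :=
    hw_cont.inv₀ fun s hs => (hw_pos s hs).ne'
  exact intervalIntegral.integral_hasDerivAt_right
    ((intervalIntegrable_iff_integrableOn_Ioo_of_le ht.le).2 (hwQ t ht))
    (hcont.stronglyMeasurableAtFilter isOpen_Ioi t ht)
    (hcont.continuousAt (Ioi_mem_nhds ht))

/-- The function `1 / FQ w` is the logarithmic derivative of `fQ w`. -/
theorem integral_inv_FQ {w : ℝ → ℝ} (hw_pos : ∀ t, 0 < t → 0 < w t)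
    (hw_cont : ContinuousOn w (Ioi 0))
    (hwQ : ∀ b, 0 < b → IntegrableOn (fun s => (w s)⁻¹) (Ioo 0 b)) {t η : ℝ} (ht : 0 < t)
    (htη : t ≤ η) :
    ∫ s in t..η, (FQ w s)⁻¹ = Real.log (fQ w η) - Real.log (fQ w t) := by
  have hpos : ∀ s ∈ uIcc t η, 0 < s := fun s hs => by
    rw [uIcc_of_le htη] at hs
    exact ht.trans_le hs.1
  have hderiv := fun s (hs : 0 < s) => hasDerivAt_fQ hw_pos hw_cont hwQ hs
  refine intervalIntegral.integral_eq_sub_of_hasDerivAt (f := fun s => Real.log (fQ w s))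
    (fun s hs => ?_) (ContinuousOn.intervalIntegrable ?_)
  · rw [FQ, mul_inv, ← div_eq_mul_inv]
    exact (hderiv s (hpos s hs)).log (fQ_pos hw_pos hwQ (hpos s hs)).ne'
  · refine ContinuousOn.inv₀ ((hw_cont.mono hpos).mul fun s hs =>
      (hderiv s (hpos s hs)).continuousAt.continuousWithinAt) fun s hs => ?_
    exact (mul_pos (hw_pos s (hpos s hs)) (fQ_pos hw_pos hwQ (hpos s hs))).ne'

/-- If `w ∈ Q(ℝ₊)` is admissible, then for every `μ > 0` there are
`η, K > 0` with `√t · G_η(t) ≤ K` on `(0,η)`. -/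
theorem sqrt_mul_G_bounded_Q (w : ℝ → ℝ)
    (hw_pos : ∀ t, 0 < t → 0 < w t)
    (hw_smooth : ContDiffOn ℝ 1 w (Set.Ioi 0))
    (hw_lim : ∃ a : ENNReal, Filter.Tendsto (fun t => ENNReal.ofReal (w t))
        (nhdsWithin (0:ℝ) (Set.Ioi 0)) (nhds a))
    (hwQ : ∀ b, 0 < b → MeasureTheory.IntegrableOn (fun s => (w s)⁻¹) (Set.Ioo 0 b))
    (hadm : ∃ η₀ K₀ : ℝ, 0 < η₀ ∧ 0 < K₀ ∧ ∀ t, 0 < t → t < η₀ →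
        Real.exp (-K₀ / Real.sqrt t) ≤ ∫ s in (0:ℝ)..t, (w s)⁻¹) :
    ∀ μ : ℝ, 0 < μ → ∃ η K : ℝ, 0 < η ∧ 0 < K ∧
      ∀ t ∈ Set.Ioo (0:ℝ) η, Real.sqrt t * GQ w μ η t ≤ K := by
  intro μ hμ
  obtain ⟨η, K₀, hη, hK₀, hexp⟩ := hadm
  refine ⟨η, √η * (μ + |Real.log (fQ w η)|) + K₀, hη, by positivity, fun t ht => ?_⟩
  have hsqrt : 0 < √t := Real.sqrt_pos.2 ht.1
  have hlog : -K₀ / √t ≤ Real.log (fQ w t) :=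
    (Real.le_log_iff_exp_le (fQ_pos hw_pos hwQ ht.1)).2 (hexp t ht.1 ht.2)
  rw [GQ, integral_inv_FQ hw_pos hw_smooth.continuousOn hwQ ht.1 ht.2.le]
  calc √t * (μ + (Real.log (fQ w η) - Real.log (fQ w t)))
      ≤ √t * (μ + (|Real.log (fQ w η)| - -K₀ / √t)) := by
        gcongr
        exact le_abs_self _
    _ = √t * (μ + |Real.log (fQ w η)|) + K₀ := by
        field_simp
        ring
    _ ≤ √η * (μ + |Real.log (fQ w η)|) + K₀ := by
        gcongr
        exact ht.2.le
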